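/- arXiv:2212.11513 — 2 statements merged into one kernel-verified Lean document; each statement's English description precedes it below -/
import Mathlib

section
/- For all nonzero complex numbers z, t, f0, f1, f2, u, the cofactor matrix of the Lax matrix satisfies (𝒜(z,t,f0,f1,f2,u))^⋄ = 𝒜(z, t⁻¹, f0⁻¹, f1⁻¹, f2⁻¹, u⁻¹). (This is the identity underlying the lift of the symmetry 𝒯₊ of q-Painlevé IV to the Lax pair.) -/
/-!
Taking cofactors is multiplicative, and on each factor `Mmat α t f z` it swaps the diagonal entries,
which amounts to inverting `t` and `f`. Under conjugation by `P` the scalars `det P` and `det P⁻¹`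
cancel, so `P` is replaced by its inverse transpose: the gauge factor `diag(u, 1)` becomes
`diag(u⁻¹, 1)`.
-/

open Matrix

/-- Cofactor matrix (adjugate transpose) of a 2×2 complex matrix. -/
def cof (U : Matrix (Fin 2) (Fin 2) ℂ) : Matrix (Fin 2) (Fin 2) ℂ :=
  !![U 1 1, -(U 1 0); -(U 0 1), U 0 0]

/-- The elementary factor M(α,t,f;z) of the Lax matrix. -/
noncomputable def Mmat (α t f z : ℂ) : Matrix (Fin 2) (Fin 2) ℂ :=
  !![-Complex.I * α * t * z / f, 1; -1, -Complex.I * α * f * z / t]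

/-- The Lax matrix 𝒜(z,t,f0,f1,f2,u) of q-Painlevé IV. -/
noncomputable def laxA (q a0 a2 z t f0 f1 f2 u : ℂ) : Matrix (Fin 2) (Fin 2) ℂ :=
  !![u, 0; 0, 1] * Mmat q t f2 z * Mmat (a0 * a2) t f0 z * Mmat a0 t f1 z * !![u⁻¹, 0; 0, 1]

section Adjugate

variable {n R : Type*} [Fintype n] [DecidableEq n] [CommRing R]

lemma adjugate_eq_det_smul_of_mul_eq_one {P Q : Matrix n n R} (hPQ : P * Q = 1) :
    adjugate P = det P • Q := by
  calc
    adjugate P = adjugate P * (P * Q) := by rw [hPQ, mul_one]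
    _ = det P • Q := by rw [← mul_assoc, adjugate_mul, smul_mul, one_mul]

lemma adjugate_conj_of_mul_eq_one {P Q : Matrix n n R} (hPQ : P * Q = 1) (X : Matrix n n R) :
    adjugate (P * X * Q) = P * adjugate X * Q := by
  have hQP : Q * P = 1 := mul_eq_one_comm.mp hPQ
  have hdet : det Q * det P = 1 := by rw [← det_mul, hQP, det_one]
  calc
    adjugate (P * X * Q) = adjugate Q * (adjugate X * adjugate P) := by
      simp only [adjugate_mul_distrib]
    _ = (det Q * det P) • (P * (adjugate X * Q)) := by
      rw [adjugate_eq_det_smul_of_mul_eq_one hPQ, adjugate_eq_det_smul_of_mul_eq_one hQP,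
        Matrix.mul_smul, Matrix.mul_smul, Matrix.smul_mul, smul_smul, mul_comm (det P)]
    _ = P * adjugate X * Q := by rw [hdet, one_smul, mul_assoc]

end Adjugate

lemma cof_eq_transpose_adjugate (U : Matrix (Fin 2) (Fin 2) ℂ) : cof U = (adjugate U)ᵀ := by
  rw [adjugate_fin_two, eta_fin_two (transpose _)]
  rfl

lemma cof_mul (U V : Matrix (Fin 2) (Fin 2) ℂ) : cof (U * V) = cof U * cof V := by
  simp only [cof_eq_transpose_adjugate, adjugate_mul_distrib, transpose_mul]

lemma cof_conj_of_mul_eq_one {P Q : Matrix (Fin 2) (Fin 2) ℂ} (hPQ : P * Q = 1)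
    (X : Matrix (Fin 2) (Fin 2) ℂ) : cof (P * X * Q) = Qᵀ * cof X * Pᵀ := by
  rw [cof_eq_transpose_adjugate, cof_eq_transpose_adjugate, adjugate_conj_of_mul_eq_one hPQ,
    transpose_mul, transpose_mul, mul_assoc]

lemma cof_Mmat (α t f z : ℂ) : cof (Mmat α t f z) = Mmat α t⁻¹ f⁻¹ z := by
  have hdiag (a b : ℂ) :
      -Complex.I * α * a * z / b = -Complex.I * α * b⁻¹ * z / a⁻¹ := by
    rw [div_inv_eq_mul]
    ring
  calc
    cof (Mmat α t f z)
        = !![-Complex.I * α * f * z / t, -(-1); -1, -Complex.I * α * t * z / f] := rfl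
    _ = Mmat α t⁻¹ f⁻¹ z := by rw [hdiag f t, hdiag t f, neg_neg, Mmat]

/-- The identity underlying the lift of the symmetry 𝒯₊ to the Lax pair:
`(𝒜(z,t,f0,f1,f2,u))^⋄ = 𝒜(z,t⁻¹,f0⁻¹,f1⁻¹,f2⁻¹,u⁻¹)`. -/
theorem cof_laxA_eq (q a0 a2 : ℂ) (hq : q ≠ 0) (ha0 : a0 ≠ 0) (ha2 : a2 ≠ 0)
    (z t f0 f1 f2 u : ℂ) (hz : z ≠ 0) (ht : t ≠ 0) (hf0 : f0 ≠ 0) (hf1 : f1 ≠ 0)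
    (hf2 : f2 ≠ 0) (hu : u ≠ 0) :
    cof (laxA q a0 a2 z t f0 f1 f2 u) = laxA q a0 a2 z t⁻¹ f0⁻¹ f1⁻¹ f2⁻¹ u⁻¹ := by
  have hgauge : (!![u, 0; 0, 1] : Matrix (Fin 2) (Fin 2) ℂ) * !![u⁻¹, 0; 0, 1] = 1 := by
    simp [hu, one_fin_two]
  have htranspose (v : ℂ) :
      (!![v, 0; 0, 1] : Matrix (Fin 2) (Fin 2) ℂ)ᵀ = !![v, 0; 0, 1] :=
    eta_fin_two _
  calc
    cof (laxA q a0 a2 z t f0 f1 f2 u)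
        = cof (!![u, 0; 0, 1] * (Mmat q t f2 z * Mmat (a0 * a2) t f0 z * Mmat a0 t f1 z) *
            !![u⁻¹, 0; 0, 1]) := by
          simp only [laxA, mul_assoc]
    _ = !![u⁻¹, 0; 0, 1] * cof (Mmat q t f2 z * Mmat (a0 * a2) t f0 z * Mmat a0 t f1 z) *
          !![u, 0; 0, 1] := by
        rw [cof_conj_of_mul_eq_one hgauge, htranspose, htranspose]
    _ = laxA q a0 a2 z t⁻¹ f0⁻¹ f1⁻¹ f2⁻¹ u⁻¹ := by
        simp only [cof_mul, cof_Mmat, laxA, inv_inv, mul_assoc]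
end

section
/- For all nonzero complex numbers z, t, f0, f1, f2, u, one has -σ3 · (𝒜(z,t,f0,f1,f2,u))^⋄ · σ3 = 𝒜(z, -t⁻¹, f0⁻¹, f1⁻¹, f2⁻¹, u⁻¹). (This is the identity underlying the lift of the symmetry 𝒯₋ of q-Painlevé IV to the Lax pair.) -/
open Matrix

/-- The Pauli matrix σ3. -/
def σ3 : Matrix (Fin 2) (Fin 2) ℂ := !![1, 0; 0, -1]

/-!
Conjugating the cofactor matrix by `σ3` cancels its two signs, so `U ↦ σ3 U^⋄ σ3` merely exchanges
the two coordinates. This algebra automorphism sends each factor `M(α,t,f;z)` to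
`-M(α,-t⁻¹,f⁻¹;z)` and turns the gauge by `diag(u,1)` into the gauge by `diag(1,u)`, which is the
gauge by `diag(u⁻¹,1)` since scalars cancel. The three minus signs give the sign of the identity.
-/

/-- Exchange of the two coordinates, `U ↦ σ₁ U σ₁` with `σ₁` the Pauli matrix `!![0, 1; 1, 0]`.
It is encoded as a reindexing so that it is an algebra automorphism by construction. -/
def swapConj (R : Type*) [CommSemiring R] :
    Matrix (Fin 2) (Fin 2) R ≃ₐ[R] Matrix (Fin 2) (Fin 2) R :=
  reindexAlgEquiv R R (Equiv.swap 0 1)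

theorem swapConj_of {R : Type*} [CommSemiring R] (a b c d : R) :
    swapConj R !![a, b; c, d] = !![d, c; b, a] := by
  ext i j
  fin_cases i <;> fin_cases j <;> rfl

theorem σ3_mul_cof_mul_σ3 (U : Matrix (Fin 2) (Fin 2) ℂ) :
    σ3 * cof U * σ3 = swapConj ℂ U := by
  rw [eta_fin_two U, swapConj_of]
  simp [σ3, cof]

/-- The gauge transformation by `diag(u,1)`, i.e. conjugation by that matrix when `u ≠ 0`. The
inverse is written entrywise, as in the Lax matrix. -/
def diagConj {K : Type*} [DivisionSemiring K] (u : K) (U : Matrix (Fin 2) (Fin 2) K) :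
    Matrix (Fin 2) (Fin 2) K :=
  !![u, 0; 0, 1] * U * !![u⁻¹, 0; 0, 1]

theorem diagConj_neg {K : Type*} [DivisionRing K] (u : K) (U : Matrix (Fin 2) (Fin 2) K) :
    diagConj u (-U) = -diagConj u U := by
  rw [diagConj, diagConj, mul_neg, neg_mul]

theorem swapConj_diag_one {K : Type*} [Semifield K] {u : K} (hu : u ≠ 0) :
    swapConj K !![u, 0; 0, 1] = u • !![u⁻¹, 0; 0, 1] := by
  simp [swapConj_of, smul_of, hu]

theorem swapConj_diagConj {K : Type*} [Semifield K] {u : K} (hu : u ≠ 0)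
    (U : Matrix (Fin 2) (Fin 2) K) :
    swapConj K (diagConj u U) = diagConj u⁻¹ (swapConj K U) :=
  calc swapConj K (diagConj u U)
      = u • !![u⁻¹, 0; 0, 1] * swapConj K U * (u⁻¹ • !![u⁻¹⁻¹, 0; 0, 1]) := by
        rw [diagConj, map_mul, map_mul, swapConj_diag_one hu, swapConj_diag_one (inv_ne_zero hu)]
    _ = (u⁻¹ * u) • diagConj u⁻¹ (swapConj K U) := by
        rw [diagConj, smul_mul_assoc, smul_mul_assoc, mul_smul_comm, smul_smul, mul_comm u]
    _ = diagConj u⁻¹ (swapConj K U) := by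
        rw [inv_mul_cancel₀ hu, one_smul]

theorem swapConj_Mmat (α t f z : ℂ) :
    swapConj ℂ (Mmat α t f z) = -Mmat α (-t⁻¹) f⁻¹ z := by
  have entry₀₀ : -Complex.I * α * f * z / t = -(-Complex.I * α * -t⁻¹ * z / f⁻¹) := by
    rw [div_inv_eq_mul]
    ring
  have entry₁₁ : -Complex.I * α * t * z / f = -(-Complex.I * α * f⁻¹ * z / -t⁻¹) := by
    rw [div_neg, div_inv_eq_mul]
    ring
  simp only [Mmat, swapConj_of, neg_of, neg_cons, neg_empty, neg_neg, entry₀₀, entry₁₁]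

/-- The product of the three elementary factors of the Lax matrix, without the gauge by
`diag(u,1)`. -/
noncomputable def laxCore (q a0 a2 z t f0 f1 f2 : ℂ) : Matrix (Fin 2) (Fin 2) ℂ :=
  Mmat q t f2 z * Mmat (a0 * a2) t f0 z * Mmat a0 t f1 z

theorem laxA_eq_diagConj_laxCore (q a0 a2 z t f0 f1 f2 u : ℂ) :
    laxA q a0 a2 z t f0 f1 f2 u = diagConj u (laxCore q a0 a2 z t f0 f1 f2) := by
  simp only [laxA, diagConj, laxCore, Matrix.mul_assoc]

theorem swapConj_laxCore (q a0 a2 z t f0 f1 f2 : ℂ) :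
    swapConj ℂ (laxCore q a0 a2 z t f0 f1 f2)
      = -laxCore q a0 a2 z (-t⁻¹) f0⁻¹ f1⁻¹ f2⁻¹ := by
  simp only [laxCore, map_mul, swapConj_Mmat, neg_mul, mul_neg, neg_neg]

/-- The identity underlying the lift of the symmetry 𝒯₋ to the Lax pair:
`-σ3·(𝒜(z,t,f0,f1,f2,u))^⋄·σ3 = 𝒜(z,-t⁻¹,f0⁻¹,f1⁻¹,f2⁻¹,u⁻¹)`. -/
theorem neg_σ3_cof_laxA_σ3_eq (q a0 a2 : ℂ) (hq : q ≠ 0) (ha0 : a0 ≠ 0) (ha2 : a2 ≠ 0)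
    (z t f0 f1 f2 u : ℂ) (hz : z ≠ 0) (ht : t ≠ 0) (hf0 : f0 ≠ 0) (hf1 : f1 ≠ 0)
    (hf2 : f2 ≠ 0) (hu : u ≠ 0) :
    -(σ3 * cof (laxA q a0 a2 z t f0 f1 f2 u) * σ3)
      = laxA q a0 a2 z (-t⁻¹) f0⁻¹ f1⁻¹ f2⁻¹ u⁻¹ := by
  calc -(σ3 * cof (laxA q a0 a2 z t f0 f1 f2 u) * σ3)
      = -swapConj ℂ (diagConj u (laxCore q a0 a2 z t f0 f1 f2)) := by
        rw [σ3_mul_cof_mul_σ3, laxA_eq_diagConj_laxCore]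
    _ = -diagConj u⁻¹ (-laxCore q a0 a2 z (-t⁻¹) f0⁻¹ f1⁻¹ f2⁻¹) := by
        rw [swapConj_diagConj hu, swapConj_laxCore]
    _ = laxA q a0 a2 z (-t⁻¹) f0⁻¹ f1⁻¹ f2⁻¹ u⁻¹ := by
        rw [diagConj_neg, neg_neg, laxA_eq_diagConj_laxCore]
end
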